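/- arXiv:2105.07247 — 3 statements merged into one kernel-verified Lean document; each statement's English description precedes it below -/
import Mathlib

section
/- Let G be a finite group and N a normal subgroup such that G/N is cyclic, generated by the coset of q ∈ G. Then (G:N) times the number of conjugacy classes of G contained in qN equals the number of irreducible complex characters ρ of G whose restriction to N is irreducible. -/
open scoped BigOperators

/-- `ρ : G → ℂ` is the character of an irreducible (simple) finite-dimensional
complex representation of `G`. -/
def IsIrrChar (G : Type) [Group G] (ρ : G → ℂ) : Prop :=
  ∃ V : FDRep ℂ G, CategoryTheory.Simple V ∧ ρ = V.character

/-- `Θ : G → ℂ` is the character of some finite-dimensional complex representation of `G`. -/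
def IsChar (G : Type) [Group G] (Θ : G → ℂ) : Prop :=
  ∃ V : FDRep ℂ G, Θ = V.character

variable {G : Type} [Group G]

/-- The action of a character `χ ∈ Q̂` (where `Q = G ⧸ N`) on a function `ρ : G → ℂ`:
`(χ · ρ)(g) = χ(gN) · ρ(g)`. -/
def charMul (N : Subgroup G) [N.Normal] (χ : (G ⧸ N) →* ℂˣ) (ρ : G → ℂ) : G → ℂ :=
  fun g => (χ (g : G ⧸ N) : ℂ) * ρ g

/-- The orbit of `ρ` under the tensoring action of `Q̂ = Hom(G ⧸ N, ℂˣ)`. -/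
def qhatOrbit (N : Subgroup G) [N.Normal] (ρ : G → ℂ) : Set (G → ℂ) :=
  {ρ' | ∃ χ : (G ⧸ N) →* ℂˣ, ρ' = charMul N χ ρ}

/-- The coset `qN`, as a subset of `G`. -/
def coset (N : Subgroup G) [N.Normal] (q : G) : Set G :=
  {g | (g : G ⧸ N) = (q : G ⧸ N)}

/-- `C_q`: the set of conjugacy classes of `G` contained in the coset `qN`. -/
def Cset (N : Subgroup G) [N.Normal] (q : G) : Set (ConjClasses G) :=
  {c | c.carrier ⊆ coset N q}

/-- `R_q`: the set of `Q̂`-orbits on the irreducible characters of `G`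
containing a character not identically zero on `qN`. -/
def Rset (N : Subgroup G) [N.Normal] (q : G) : Set (Set (G → ℂ)) :=
  {S | (∃ ρ, IsIrrChar G ρ ∧ S = qhatOrbit N ρ) ∧ ∃ ρ' ∈ S, ∃ g ∈ coset N q, ρ' g ≠ 0}

/-- The class function `π_x` for `x ∈ Q = G ⧸ N`:
`π_x(g) = (1/#Q̂) ∑_{χ ∈ Q̂} conj(χ(x)) χ(gN)`. -/
noncomputable def piQ (N : Subgroup G) [N.Normal] (x : G ⧸ N) : G → ℂ :=
  fun g => (Nat.card ((G ⧸ N) →* ℂˣ) : ℂ)⁻¹ *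
    ∑ᶠ χ : (G ⧸ N) →* ℂˣ, (starRingEnd ℂ) (χ x : ℂ) * (χ (g : G ⧸ N) : ℂ)

/-- The space of class functions on `G`, as a submodule of `G → ℂ`. -/
noncomputable def classFunSubmodule (G : Type) [Group G] : Submodule ℂ (G → ℂ) where
  carrier := {f | ∀ g h : G, f (h * g * h⁻¹) = f g}
  add_mem' := by intro a b ha hb g h; simp only [Pi.add_apply, ha g h, hb g h]
  zero_mem' := by intro g h; rfl
  smul_mem' := by intro c f hf g h; simp only [Pi.smul_apply, hf g h]

/-- The space of class functions on `G` vanishing outside the coset `qN`. -/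
noncomputable def cosetClassFun (N : Subgroup G) [N.Normal] (q : G) : Submodule ℂ (G → ℂ) where
  carrier := {f | (∀ g h : G, f (h * g * h⁻¹) = f g) ∧ ∀ g, g ∉ coset N q → f g = 0}
  add_mem' := by
    intro a b ha hb
    exact ⟨fun g h => by simp only [Pi.add_apply, ha.1 g h, hb.1 g h],
      fun g hg => by simp only [Pi.add_apply, ha.2 g hg, hb.2 g hg, add_zero]⟩
  zero_mem' := ⟨fun g h => rfl, fun g hg => rfl⟩
  smul_mem' := by
    intro c f hf
    exact ⟨fun g h => by simp only [Pi.smul_apply, hf.1 g h],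
      fun g hg => by simp only [Pi.smul_apply, hf.2 g hg, smul_zero]⟩


open CategoryTheory

lemma isIrrChar_iff {H : Type} [Group H] [Fintype H] (f : H → ℂ) :
    IsIrrChar H f ↔ IsChar H f ∧ ∑ g, f g * f g⁻¹ = Nat.card H := by
  constructor
  · rintro ⟨V, hV, rfl⟩
    exact ⟨⟨V, rfl⟩, (FDRep.simple_iff_char_is_norm_one V).1 hV⟩
  · rintro ⟨⟨V, rfl⟩, h⟩
    exact ⟨V, (FDRep.simple_iff_char_is_norm_one V).2 h, rfl⟩

open Classical in
lemma irr_orth {H : Type} [Group H] [Fintype H] {f f' : H → ℂ} (hf : IsIrrChar H f)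
    (hf' : IsIrrChar H f') : ∑ g, f g * f' g⁻¹ = if f = f' then (Nat.card H : ℂ) else 0 := by
  split_ifs with h
  · subst h
    exact ((isIrrChar_iff f).1 hf).2
  · obtain ⟨V, hV, rfl⟩ := hf
    obtain ⟨W, hW, rfl⟩ := hf'
    have hne : (Nat.card H : ℂ) ≠ 0 := by
      exact_mod_cast Nat.card_pos.ne'
    have := invertibleOfNonzero hne
    have h2 := FDRep.char_orthonormal V W
    rw [if_neg] at h2
    · simpa [hne] using h2
    · rintro ⟨i⟩
      exact h (FDRep.char_iso i)

lemma irr_finite (H : Type) [Group H] [Fintype H] : {f : H → ℂ | IsIrrChar H f}.Finite := by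
  classical
  have hne : (Nat.card H : ℂ) ≠ 0 := by
    exact_mod_cast Nat.card_pos.ne'
  have : LinearIndependent ℂ (fun x : {f : H → ℂ | IsIrrChar H f} => (x : H → ℂ)) := by
    rw [linearIndependent_iff']
    intro s c hc i hi
    have h1 : ∑ g, (∑ j ∈ s, c j • (j : H → ℂ)) g * (i : H → ℂ) g⁻¹ = 0 := by
      rw [hc]; simp
    simp only [Finset.sum_apply, Pi.smul_apply, smul_eq_mul, Finset.sum_mul] at h1
    rw [Finset.sum_comm] at h1
    simp_rw [mul_assoc, ← Finset.mul_sum] at h1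
    have h2 : ∀ j ∈ s, c j * ∑ g, (j : H → ℂ) g * (i : H → ℂ) g⁻¹
        = if j = i then c i * (Nat.card H : ℂ) else 0 := by
      intro j _
      rw [irr_orth j.2 i.2]
      by_cases hji : j = i
      · subst hji; simp
      · rw [if_neg hji, if_neg (fun h => hji (Subtype.ext h)), mul_zero]
    rw [Finset.sum_congr rfl h2] at h1
    simpa [hi, hne] using h1
  exact this.setFinite

lemma irr_zero {H V : Type} [Group H] [Fintype H] [AddCommGroup V] [Module ℂ V]
    [FiniteDimensional ℂ V] (ρ : Representation ℂ H V) [ρ.IsIrreducible] (f : H → ℂ)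
    (hf : ∀ g h : H, f (h * g * h⁻¹) = f g)
    (h0 : ∀ ρ, IsIrrChar H ρ → ∑ g, f g * ρ g⁻¹ = 0) : ∑ g, f g • ρ g⁻¹ = 0 := by
  classical
  have hne : (Nat.card H : ℂ) ≠ 0 := by
    exact_mod_cast Nat.card_pos.ne'
  have := invertibleOfNonzero hne
  have hirr : IsIrrChar H ρ.character := by
    rw [isIrrChar_iff]
    refine ⟨⟨FDRep.of ρ, rfl⟩, ?_⟩
    have h1 := Representation.char_orthonormal ρ ρ
    rw [if_pos ⟨Representation.Equiv.refl ρ⟩, inv_mul_eq_one₀ hne] at h1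
    exact h1.symm
  have htr := h0 _ hirr
  set T := ∑ g, f g • ρ g⁻¹ with hT
  have hTtr : LinearMap.trace ℂ V T = 0 := by
    rw [← htr, hT]
    simp [Representation.character]
  have hcomm : ∀ x, T ∘ₗ ρ x = ρ x ∘ₗ T := by
    intro x
    change T * ρ x = ρ x * T
    simp only [hT, Finset.sum_mul, Finset.mul_sum, smul_mul_assoc, mul_smul_comm, ← map_mul]
    refine Fintype.sum_equiv (MulAut.conj x⁻¹).toEquiv _ _ ?_
    intro g
    have := hf g x⁻¹
    simp at this
    simp [← this, mul_assoc]
  obtain ⟨c, hc⟩ := (Representation.IsIrreducible.algebraMap_intertwiningMap_bijective_of_isAlgClosed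
    (ρ := ρ)).2 ⟨T, hcomm⟩
  have hTc : T = c • LinearMap.id := by
    have := congrArg Representation.IntertwiningMap.toLinearMap hc
    rw [Algebra.algebraMap_eq_smul_one] at this
    exact this.symm
  rw [hTc] at hTtr ⊢
  simp only [map_smul, LinearMap.trace_id, smul_eq_mul, mul_eq_zero] at hTtr
  rcases hTtr with h | h
  · simp [h]
  · have h' : Module.finrank ℂ V = 0 := by exact_mod_cast h
    have := Module.finrank_zero_iff.1 h'
    exact Subsingleton.elim _ _

/-- class functions orthogonal to all irreducible characters vanish -/
lemma complete {H : Type} [Group H] [Fintype H] (f : H → ℂ)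
    (hf : ∀ g h : H, f (h * g * h⁻¹) = f g)
    (h0 : ∀ ρ, IsIrrChar H ρ → ∑ g, f g * ρ g⁻¹ = 0) : f = 0 := by
  classical
  have hne : (Nat.card H : ℂ) ≠ 0 := by
    exact_mod_cast Nat.card_pos.ne'
  have := invertibleOfNonzero hne
  have : NeZero (Nat.card H : ℂ) := ⟨hne⟩
  let z : MonoidAlgebra ℂ H := ∑ g, MonoidAlgebra.single g⁻¹ (f g)
  have hz : ∀ a : MonoidAlgebra ℂ H, z * a = a * z := by
    intro a
    induction a using MonoidAlgebra.induction_on with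
    | of x =>
      simp only [z, MonoidAlgebra.of_apply, Finset.sum_mul, Finset.mul_sum,
        MonoidAlgebra.single_mul_single, one_mul, mul_one]
      refine Fintype.sum_equiv (MulAut.conj x⁻¹).toEquiv _ _ ?_
      intro g
      have := hf g x⁻¹
      simp at this
      simp [← this, mul_assoc]
    | add a b ha hb => simp [mul_add, add_mul, ha, hb]
    | smul r a ha => simp [ha]
  -- z acts by zero on simple submodules
  have key : ∀ M : Submodule (MonoidAlgebra ℂ H) (MonoidAlgebra ℂ H),
      IsSimpleModule (MonoidAlgebra ℂ H) M → ∀ m ∈ M, z * m = 0 := by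
    intro M hM m hm
    have hfin : Module.Finite ℂ (MonoidAlgebra ℂ H) := inferInstance
    have hfinM : FiniteDimensional ℂ M :=
      FiniteDimensional.of_injective ((M.restrictScalars ℂ).subtype) Subtype.val_injective
    let σ : Representation ℂ H M := Representation.ofModule' M
    have hσ : ∀ r : MonoidAlgebra ℂ H, ∀ m : M, σ.asAlgebraHom r m = r • m := by
      intro r m
      have : σ.asAlgebraHom = Algebra.lsmul ℂ ℂ M := by
        simp only [σ, Representation.ofModule', Representation.asAlgebraHom]
        exact Equiv.apply_symm_apply _ _
      rw [this]; rfl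
    have hirr : σ.IsIrreducible := by
      rw [Representation.irreducible_iff_isSimpleModule_asModule]
      let e : σ.asModule ≃ₗ[MonoidAlgebra ℂ H] M :=
        { toFun := fun x => σ.asModuleEquiv x
          invFun := fun x => σ.asModuleEquiv.symm x
          left_inv := fun x => by simp
          right_inv := fun x => by simp
          map_add' := fun x y => by simp
          map_smul' := fun r x => by
            rw [Representation.asModuleEquiv_map_smul, hσ]; rfl }
      exact IsSimpleModule.congr e
    have h1 := irr_zero σ f hf h0
    have h2 : σ.asAlgebraHom z = 0 := by
      rw [← h1]
      simp [z, Representation.asAlgebraHom_single]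
    have h3 := hσ z ⟨m, hm⟩
    rw [h2] at h3
    exact (congrArg Subtype.val h3).symm
  have hz0 : z = 0 := by
    let K : Submodule (MonoidAlgebra ℂ H) (MonoidAlgebra ℂ H) :=
      { carrier := {a | z * a = 0}
        add_mem' := by intro a b ha hb; simp only [Set.mem_ofPred_eq] at *; rw [mul_add, ha, hb, add_zero]
        zero_mem' := by simp
        smul_mem' := by
          intro c x hx
          simp only [Set.mem_ofPred_eq, smul_eq_mul] at *
          rw [← mul_assoc, hz, mul_assoc, hx, mul_zero] }
    have : K = ⊤ := by
      rw [eq_top_iff, ← IsSemisimpleModule.sSup_simples_eq_top]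
      exact sSup_le fun M hM m hm => key M hM m hm
    have h1 : (1 : MonoidAlgebra ℂ H) ∈ K := by rw [this]; trivial
    simpa [K] using h1
  ext x
  have : z.coeff x⁻¹ = 0 := by rw [hz0]; rfl
  simpa [z, Finsupp.finsetSum_apply, Finsupp.single_apply] using this

open Classical in
lemma column_orth {H : Type} [Group H] [Fintype H] (h : H) :
    ∑ ρ ∈ (irr_finite H).toFinset, ρ h * ρ h⁻¹ = (Nat.card {x : H // x * h = h * x} : ℂ) := by
  have hne : (Nat.card H : ℂ) ≠ 0 := by
    exact_mod_cast Nat.card_pos.ne'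
  let F : H → ℂ := fun g => ∑ x : H, if x * h * x⁻¹ = g then 1 else 0
  let R : H → ℂ := fun g => ∑ ρ ∈ (irr_finite H).toFinset, ρ g * ρ h⁻¹
  have hc : ∀ ρ, IsIrrChar H ρ → ∀ g x, ρ (x * g * x⁻¹) = ρ g := by
    rintro _ ⟨V, hV, rfl⟩ g x
    exact FDRep.char_conj V g x
  have key : F - R = 0 := by
    apply complete
    · intro g y
      simp only [Pi.sub_apply]
      congr 1
      · refine Fintype.sum_equiv (Equiv.mulLeft y⁻¹) _ _ ?_
        intro x
        have : x * h * x⁻¹ = y * g * y⁻¹ ↔ y⁻¹ * x * h * (y⁻¹ * x)⁻¹ = g := by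
          constructor
          · intro e
            calc y⁻¹ * x * h * (y⁻¹ * x)⁻¹ = y⁻¹ * (x * h * x⁻¹) * y := by group
              _ = g := by rw [e]; group
          · intro e
            rw [← e]; group
        simp only [Equiv.coe_mulLeft, this]
        congr
      · refine Finset.sum_congr rfl fun ρ hρ => ?_
        rw [hc ρ (by simpa using hρ)]
    · intro ρ hρ
      simp only [Pi.sub_apply, sub_mul, Finset.sum_sub_distrib]
      have e1 : ∑ g, F g * ρ g⁻¹ = Nat.card H * ρ h⁻¹ := by
        simp only [F, Finset.sum_mul]
        rw [Finset.sum_comm]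
        have : ∀ x : H, ∑ g, (if x * h * x⁻¹ = g then (1:ℂ) else 0) * ρ g⁻¹ = ρ h⁻¹ := by
          intro x
          simp only [ite_mul, one_mul, zero_mul, Finset.sum_ite_eq, Finset.mem_univ, if_true]
          rw [← hc ρ hρ h⁻¹ x]
          congr 1; group
        rw [Finset.sum_congr rfl fun x _ => this x]
        simp
      have e2 : ∑ g, R g * ρ g⁻¹ = Nat.card H * ρ h⁻¹ := by
        simp only [R, Finset.sum_mul]
        rw [Finset.sum_comm]
        have : ∀ τ ∈ (irr_finite H).toFinset, ∑ g, τ g * τ h⁻¹ * ρ g⁻¹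
            = if τ = ρ then Nat.card H * ρ h⁻¹ else 0 := by
          intro τ hτ
          have hτ' : IsIrrChar H τ := by simpa using hτ
          rw [Finset.sum_congr rfl fun g _ => mul_right_comm (τ g) (τ h⁻¹) (ρ g⁻¹)]
          rw [← Finset.sum_mul, irr_orth hτ' hρ]
          split_ifs with e
          · rw [e]
          · simp
        rw [Finset.sum_congr rfl this]
        simp [hρ]
      rw [e1, e2, sub_self]
  have := congrFun key h
  simp only [Pi.sub_apply, Pi.zero_apply, sub_eq_zero] at this
  change R h = _
  rw [← this]
  simp only [F, mul_inv_eq_iff_eq_mul]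
  rw [Finset.sum_boole, Nat.card_eq_fintype_card, Fintype.card_subtype]

lemma dual_facts {Q : Type} [Group Q] [Finite Q] (q : Q) (hgen : ∀ x : Q, x ∈ Subgroup.zpowers q) :
    Finite (Q →* ℂˣ) ∧ Nat.card (Q →* ℂˣ) = Nat.card Q ∧
      ∀ x : Q, x ≠ 1 → ∃ χ : Q →* ℂˣ, χ x ≠ 1 := by
  have hcyc : IsCyclic Q := ⟨q, hgen⟩
  let _ : CommGroup Q := IsCyclic.commGroup
  have h1 := CommGroup.card_monoidHom_of_hasEnoughRootsOfUnity Q ℂ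
  refine ⟨?_, h1, fun x hx => CommGroup.exists_apply_ne_one_of_hasEnoughRootsOfUnity Q ℂ hx⟩
  apply Nat.finite_of_card_ne_zero
  rw [h1]
  exact Nat.card_pos.ne'

open Classical in
lemma dual_sum {Q : Type} [Group Q] [Finite Q] (q : Q) (hgen : ∀ x : Q, x ∈ Subgroup.zpowers q)
    [Fintype (Q →* ℂˣ)] (x : Q) :
    ∑ χ : Q →* ℂˣ, (χ x : ℂ) = if x = 1 then (Nat.card Q : ℂ) else 0 := by
  obtain ⟨_, h1, h2⟩ := dual_facts q hgen
  split_ifs with hx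
  · subst hx
    simp [← h1]
  · obtain ⟨ψ, hψ⟩ := h2 x hx
    have h3 : ∑ χ : Q →* ℂˣ, (χ x : ℂ) = (ψ x : ℂ) * ∑ χ : Q →* ℂˣ, (χ x : ℂ) := by
      rw [Finset.mul_sum]
      symm
      refine Fintype.sum_equiv (Equiv.mulLeft ψ) _ _ ?_
      intro χ
      simp
    have h4 : (1 - (ψ x : ℂ)) * ∑ χ : Q →* ℂˣ, (χ x : ℂ) = 0 := by
      rw [sub_mul, ← h3]; ring
    rcases mul_eq_zero.1 h4 with h | h
    · exact absurd (Units.ext (by simpa using (sub_eq_zero.1 h).symm)) hψ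
    · exact h

lemma charMul_irr {G : Type} [Group G] [Fintype G] (N : Subgroup G) [N.Normal]
    (χ : (G ⧸ N) →* ℂˣ) {ρ : G → ℂ} (hρ : IsIrrChar G ρ) : IsIrrChar G (charMul N χ ρ) := by
  rw [isIrrChar_iff] at *
  obtain ⟨⟨V, rfl⟩, h⟩ := hρ
  refine ⟨?_, ?_⟩
  · let σ : Representation ℂ G V :=
      { toFun := fun g => (χ (g : G ⧸ N) : ℂ) • V.ρ g
        map_one' := by simp
        map_mul' := by
          intro a b
          simp only [QuotientGroup.mk_mul, map_mul, Units.val_mul, smul_mul_smul_comm] }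
    refine ⟨FDRep.of σ, ?_⟩
    funext g
    change _ = LinearMap.trace ℂ V ((χ (g : G ⧸ N) : ℂ) • V.ρ g)
    rw [map_smul]
    rfl
  · rw [← h]
    refine Finset.sum_congr rfl fun g _ => ?_
    simp only [charMul, QuotientGroup.mk_inv, map_inv]
    have : (χ (g : G ⧸ N) : ℂ) * ((χ (g : G ⧸ N))⁻¹ : ℂˣ) = 1 := by simp
    calc _ = ((χ (g : G ⧸ N) : ℂ) * ((χ (g : G ⧸ N))⁻¹ : ℂˣ)) *
          (V.character g * V.character g⁻¹) := by ring
      _ = _ := by rw [this, one_mul]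

open Classical in
lemma coset_sum {G : Type} [Group G] [Fintype G] (N : Subgroup G) [N.Normal] (q : G)
    (hgen : ∀ x : G ⧸ N, x ∈ Subgroup.zpowers ((q : G ⧸ N)))
    [Fintype ((G ⧸ N) →* ℂˣ)] {ρ : G → ℂ} (hρ : IsIrrChar G ρ) (a : G) :
    (Nat.card (G ⧸ N) : ℂ) * ∑ g with g ∈ coset N a, ρ g * ρ g⁻¹ =
      ∑ χ : (G ⧸ N) →* ℂˣ, (χ (a : G ⧸ N)⁻¹ : ℂ) *
        if charMul N χ ρ = ρ then (Nat.card G : ℂ) else 0 := by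
  have h1 : ∀ χ : (G ⧸ N) →* ℂˣ, (χ (a : G ⧸ N)⁻¹ : ℂ) *
        (if charMul N χ ρ = ρ then (Nat.card G : ℂ) else 0) =
        ∑ g : G, (χ ((g : G ⧸ N) * (a : G ⧸ N)⁻¹) : ℂ) * (ρ g * ρ g⁻¹) := by
    intro χ
    rw [← irr_orth (charMul_irr N χ hρ) hρ, Finset.mul_sum]
    refine Finset.sum_congr rfl fun g _ => ?_
    simp only [charMul, map_mul, Units.val_mul]
    ring
  rw [Finset.sum_congr rfl fun χ _ => h1 χ, Finset.sum_comm, Finset.sum_filter, Finset.mul_sum]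
  refine Finset.sum_congr rfl fun g _ => ?_
  rw [← Finset.sum_mul, dual_sum _ hgen, mul_inv_eq_one]
  by_cases h : (g : G ⧸ N) = (a : G ⧸ N)
  · rw [if_pos h, if_pos (show g ∈ coset N a from h)]
  · rw [if_neg h, if_neg (show g ∉ coset N a from h)]; simp

open Classical in
lemma sum_coset_irr {G : Type} [Group G] [Fintype G] (N : Subgroup G) [N.Normal] (q : G)
    (hgen : ∀ x : G ⧸ N, x ∈ Subgroup.zpowers ((q : G ⧸ N)))
    {ρ : G → ℂ} (hρ : IsIrrChar G ρ) :
    ∑ g with g ∈ coset N q, ρ g * ρ g⁻¹ =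
      if IsIrrChar N (fun n : N => ρ n) then (Nat.card N : ℂ) else 0 := by
  obtain ⟨hfin, hcard, -⟩ := dual_facts _ hgen
  let _ : Fintype ((G ⧸ N) →* ℂˣ) := Fintype.ofFinite _
  have hQ0 : (Nat.card (G ⧸ N) : ℂ) ≠ 0 := by exact_mod_cast Nat.card_pos.ne'
  have hG0 : (Nat.card G : ℂ) ≠ 0 := by exact_mod_cast Nat.card_pos.ne'
  have hGN : (Nat.card G : ℂ) = Nat.card (G ⧸ N) * Nat.card N := by
    rw [Subgroup.card_eq_card_quotient_mul_card_subgroup N]; push_cast; ring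
  have hresChar : IsChar N (fun n : N => ρ n) := by
    obtain ⟨V, -, rfl⟩ := hρ
    exact ⟨FDRep.of (V.ρ.comp N.subtype), rfl⟩
  have hN : ∑ n : N, ρ n * ρ ((n⁻¹ : N) : G) = ∑ g with g ∈ coset N (1 : G), ρ g * ρ g⁻¹ := by
    symm
    refine Finset.sum_subtype (p := fun x => x ∈ N) _ ?_ (fun g => ρ g * ρ g⁻¹)
    intro x
    simp [coset]
  have hirr : IsIrrChar N (fun n : N => ρ n) ↔
      ∑ g with g ∈ coset N (1 : G), ρ g * ρ g⁻¹ = Nat.card N := by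
    rw [isIrrChar_iff, ← hN]
    exact ⟨fun h => h.2, fun h => ⟨hresChar, h⟩⟩
  have hone : charMul N 1 ρ = ρ := by funext g; simp [charMul]
  by_cases hS : ∀ χ : (G ⧸ N) →* ℂˣ, charMul N χ ρ = ρ → χ = 1
  · have hS' : ∀ χ : (G ⧸ N) →* ℂˣ, charMul N χ ρ = ρ ↔ χ = 1 :=
      fun χ => ⟨hS χ, fun h => h ▸ hone⟩
    have hall : ∀ a : G, ∑ g with g ∈ coset N a, ρ g * ρ g⁻¹ = Nat.card N := by
      intro a
      have := coset_sum N q hgen hρ a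
      simp only [hS', mul_ite, mul_zero, Finset.sum_ite_eq', Finset.mem_univ, if_true,
        MonoidHom.one_apply, Units.val_one, one_mul] at this
      rw [hGN] at this
      exact mul_left_cancel₀ hQ0 this
    rw [if_pos (hirr.2 (hall 1)), hall]
  · push Not at hS
    obtain ⟨χ, hχ, hχ1⟩ := hS
    have hχq : (χ (q : G ⧸ N) : ℂ) ≠ 1 := by
      intro h
      apply hχ1
      refine MonoidHom.ext fun x => ?_
      obtain ⟨k, hk⟩ := hgen x
      have h' : χ (q : G ⧸ N) = 1 := Units.ext h
      simp only at hk
      rw [← hk, map_zpow, h']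
      simp
    have hv : ∀ g ∈ coset N q, ρ g = 0 := by
      intro g hg
      have h1 := congrFun hχ g
      simp only [charMul] at h1
      rw [show (g : G ⧸ N) = (q : G ⧸ N) from hg] at h1
      have h2 : ((χ (q : G ⧸ N) : ℂ) - 1) * ρ g = 0 := by rw [sub_mul, h1]; ring
      exact (mul_eq_zero.1 h2).resolve_left (sub_ne_zero.2 hχq)
    rw [if_neg]
    · refine Finset.sum_eq_zero fun g hg => ?_
      rw [hv g (by simpa using hg), zero_mul]
    · rw [hirr]
      intro hc
      have h1 := coset_sum N q hgen hρ 1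
      rw [hc, ← hGN] at h1
      simp only [QuotientGroup.mk_one, inv_one, map_one, Units.val_one, one_mul] at h1
      rw [← Finset.sum_filter, Finset.sum_const, nsmul_eq_mul] at h1
      have h2 : (Finset.univ.filter fun χ : (G ⧸ N) →* ℂˣ => charMul N χ ρ = ρ).card = 1 := by
        have : ((Finset.univ.filter fun χ : (G ⧸ N) →* ℂˣ => charMul N χ ρ = ρ).card : ℂ) = 1 :=
          mul_right_cancel₀ hG0 (by rw [← h1, one_mul])
        exact_mod_cast this
      rw [Finset.card_eq_one] at h2
      obtain ⟨ψ, hψ⟩ := h2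
      have m1 : (1 : (G ⧸ N) →* ℂˣ) ∈ ({ψ} : Finset _) := by rw [← hψ]; simp [hone]
      have m2 : χ ∈ ({ψ} : Finset _) := by rw [← hψ]; simp [hχ]
      rw [Finset.mem_singleton] at m1 m2
      exact hχ1 (m2.trans m1.symm)

open Classical in
lemma class_count {G : Type} [Group G] [Fintype G] (N : Subgroup G) [N.Normal] (q : G)
    (hab : ∀ x y : G ⧸ N, x * y = y * x) :
    ∑ g with g ∈ coset N q, Nat.card {x : G // x * g = g * x} =
      Nat.card G * (Cset N q).ncard := by
  have hfin : (Cset N q).Finite := Set.toFinite _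
  rw [Set.ncard_eq_toFinset_card _ hfin]
  have hcl : ∀ g, g ∈ coset N q → ∀ h, IsConj g h → h ∈ coset N q := by
    intro g hg h hh
    obtain ⟨c, rfl⟩ := isConj_iff.1 hh
    simp only [coset, Set.mem_ofPred_eq, QuotientGroup.mk_mul, QuotientGroup.mk_inv] at *
    rw [hab, hg]; simp
  have hm : ∀ g ∈ Finset.univ.filter (fun g => g ∈ coset N q),
      ConjClasses.mk g ∈ hfin.toFinset := by
    intro g hg
    simp only [Finset.mem_filter, Finset.mem_univ, true_and] at hg
    rw [Set.Finite.mem_toFinset]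
    intro h hh
    exact hcl g hg h (ConjClasses.mk_eq_mk_iff_isConj.1 (ConjClasses.mem_carrier_iff_mk_eq.1 hh)).symm
  rw [← Finset.sum_fiberwise_of_maps_to hm]
  rw [Finset.sum_congr rfl (g := fun _ => Nat.card G), Finset.sum_const, smul_eq_mul, mul_comm]
  intro c hc
  rw [Set.Finite.mem_toFinset] at hc
  obtain ⟨g0, rfl⟩ := ConjClasses.mk_surjective c
  have hset : ((Finset.univ.filter (fun g => g ∈ coset N q)).filter
      fun g => ConjClasses.mk g = ConjClasses.mk g0) = (ConjClasses.mk g0).carrier.toFinset := by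
    ext g
    simp only [Finset.mem_filter, Finset.mem_univ, true_and, Set.mem_toFinset,
      ConjClasses.mem_carrier_iff_mk_eq, and_iff_right_iff_imp]
    intro h
    exact hc (ConjClasses.mem_carrier_iff_mk_eq.2 h)
  rw [hset]
  have hconst : ∀ g ∈ (ConjClasses.mk g0).carrier.toFinset,
      Nat.card {x : G // x * g = g * x} = Nat.card (MulAction.stabilizer (ConjAct G) g0) := by
    intro g hg
    rw [Set.mem_toFinset, ConjClasses.mem_carrier_iff_mk_eq, ConjClasses.mk_eq_mk_iff_isConj] at hg
    obtain ⟨c, hc⟩ := isConj_iff.1 hg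
    refine Nat.card_congr (((MulAut.conj c).toEquiv.trans ConjAct.toConjAct.toEquiv).subtypeEquiv ?_)
    intro x
    rw [MulAction.mem_stabilizer_iff, ← hc]
    simp only [Equiv.trans_apply, MulEquiv.toEquiv_eq_coe, MulEquiv.coe_toEquiv,
      ConjAct.toConjAct_smul, MulAut.conj_apply, mul_inv_eq_iff_eq_mul]
    constructor
    · intro h
      calc c * x * c⁻¹ * (c * g * c⁻¹) = c * (x * g) * c⁻¹ := by group
        _ = _ := by rw [h]; group
    · intro h
      calc x * g = c⁻¹ * (c * x * c⁻¹ * (c * g * c⁻¹)) * c := by group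
        _ = _ := by rw [h]; group
  rw [Finset.sum_congr rfl hconst, Finset.sum_const, smul_eq_mul]
  have := MulAction.card_orbit_mul_card_stabilizer_eq_card_group (ConjAct G) g0
  rw [ConjAct.card] at this
  rw [Nat.card_eq_fintype_card (α := G), ← this, ← Nat.card_eq_fintype_card (α := MulAction.stabilizer _ _)]
  congr 1
  rw [← Nat.card_eq_fintype_card, Set.toFinset_card, ← Nat.card_eq_fintype_card,
    ConjAct.orbit_eq_carrier_conjClasses]

/-- If `G ⧸ N` is cyclic generated by `qN`, then `(G:N)` times the number
of conjugacy classes of `G` in `qN` equals the number of irreducible characters of `G`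
whose restriction to `N` is irreducible. -/
theorem index_mul_conjClasses_coset_card
    (G : Type) [Group G] [Fintype G] (N : Subgroup G) [N.Normal] (q : G)
    (hgen : ∀ x : G ⧸ N, x ∈ Subgroup.zpowers ((q : G ⧸ N))) :
    N.index * (Cset N q).ncard =
      {ρ : G → ℂ | IsIrrChar G ρ ∧ IsIrrChar ↥N (fun n : ↥N => ρ ↑n)}.ncard := by

  classical
  have hab : ∀ x y : G ⧸ N, x * y = y * x := by
    intro x y
    obtain ⟨i, rfl⟩ := hgen x
    obtain ⟨j, rfl⟩ := hgen y
    simp only [← zpow_add, add_comm]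
  have h1 : ∑ ρ ∈ (irr_finite G).toFinset, ∑ g with g ∈ coset N q, ρ g * ρ g⁻¹
      = (Nat.card G : ℂ) * (Cset N q).ncard := by
    rw [Finset.sum_comm, Finset.sum_congr rfl fun g _ => column_orth g]
    exact_mod_cast class_count N q hab
  rw [Finset.sum_congr rfl fun ρ hρ => sum_coset_irr N q hgen
    (show IsIrrChar G ρ by simpa using hρ)] at h1
  rw [← Finset.sum_filter, Finset.sum_const, nsmul_eq_mul] at h1
  have h2 : ((irr_finite G).toFinset.filter fun ρ => IsIrrChar N (fun n : N => ρ n)).card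
      * Nat.card N = Nat.card G * (Cset N q).ncard := by exact_mod_cast h1
  have h3 : {ρ : G → ℂ | IsIrrChar G ρ ∧ IsIrrChar ↥N (fun n : ↥N => ρ ↑n)}.ncard
      = ((irr_finite G).toFinset.filter fun ρ => IsIrrChar N (fun n : N => ρ n)).card := by
    rw [← Set.ncard_coe_finset]
    congr 1
    ext ρ
    simp
  rw [h3]
  apply Nat.eq_of_mul_eq_mul_right (Nat.card_pos (α := N))
  rw [h2, ← N.index_mul_card]
  ring
end

section
/- Let G be a finite group and N a normal subgroup with Q = G/N cyclic. Suppose τ is an irreducible complex character of N and ρ is an irreducible complex character of G with Res_N ρ = τ. Then the set of irreducible characters ρ' of G with Res_N ρ' = τ is exactly the Q̂-orbit of ρ under the tensoring action, and hence has exactly (G:N) elements. -/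
open scoped BigOperators

variable {G : Type} [Group G]

open CategoryTheory in
theorem aux_iso {H : Type} [Group H] [Fintype H] (V W : FDRep ℂ H) (hV : Simple V)
    (hW : Simple W) (h : V.character = W.character) :
    ∃ e : V ≃ₗ[ℂ] W, ∀ (g : H) (v : V), e (V.ρ g v) = W.ρ g (e v) := by
  have := invertibleOfNonzero (NeZero.ne (Nat.card H : ℂ))
  have h1 := FDRep.char_orthonormal V W
  rw [← h, (FDRep.simple_iff_char_is_norm_one V).1 hV, inv_mul_cancel_of_invertible] at h1
  have h2 : Nonempty (V ≅ W) := by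
    by_contra hn
    rw [if_neg hn] at h1
    simp at h1
  obtain ⟨i⟩ := h2
  refine ⟨FDRep.isoToLinearEquiv i, fun g v => ?_⟩
  rw [FDRep.Iso.conj_ρ i g, LinearEquiv.conj_apply_apply, LinearEquiv.symm_apply_apply]

open CategoryTheory in
theorem aux_nontrivial {H : Type} [Group H] [Fintype H] (V : FDRep ℂ H) (hV : Simple V) :
    ∃ v : V, v ≠ 0 := by
  by_contra! hn
  have h1 := (FDRep.simple_iff_char_is_norm_one V).1 hV
  have h2 : ∀ g, V.character g = 0 := fun g => by
    have : V.ρ g = 0 := LinearMap.ext fun v => hn _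
    rw [FDRep.character, this, map_zero]
  simp only [h2, mul_zero, Finset.sum_const_zero] at h1
  exact NeZero.ne (Nat.card H : ℂ) h1.symm

open CategoryTheory in
theorem aux_schur {H : Type} [Group H] [Fintype H] (V : FDRep ℂ H) (hV : Simple V)
    (f : V →ₗ[ℂ] V) (hf : ∀ (g : H) (v : V), f (V.ρ g v) = V.ρ g (f v)) :
    ∃ c : ℂ, ∀ v, f v = c • v := by
  have := invertibleOfNonzero (NeZero.ne (Nat.card H : ℂ))
  have h1 := (FDRep.simple_iff_char_is_norm_one V).1 hV
  have h2 := Representation.card_inv_mul_sum_char_mul_char_eq_finrank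
    (G := H) (k := ℂ) (V := V) (W := V) V.ρ V.ρ
  change (Nat.card H : ℂ)⁻¹ * ∑ g : H, V.character g * V.character g⁻¹ = _ at h2
  rw [h1, inv_mul_cancel_of_invertible] at h2
  have h3 : Module.finrank ℂ (Representation.IntertwiningMap (V := V) (W := V) V.ρ V.ρ) = 1 := by
    exact_mod_cast h2.symm
  obtain ⟨v0, hv0⟩ := aux_nontrivial V hV
  have h4 : (Representation.IntertwiningMap.id (V := V) V.ρ) ≠ 0 := fun h =>
    hv0 (DFunLike.congr_fun h v0)
  obtain ⟨c, hc⟩ := (finrank_eq_one_iff_of_nonzero' _ h4).1 h3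
    ⟨f, fun g => LinearMap.ext fun v => hf g v⟩
  exact ⟨c, fun v => (DFunLike.congr_fun hc v).symm⟩

/-- The twist of a representation by a linear character. -/
noncomputable def twistRep {G : Type} [Group G] (V : FDRep ℂ G) (ψ : G →* ℂˣ) :
    Representation ℂ G V where
  toFun g := (ψ g : ℂ) • V.ρ g
  map_one' := by simp
  map_mul' a b := by
    ext v
    simp [smul_smul, mul_comm]

theorem twist_char {G : Type} [Group G] (V : FDRep ℂ G) (ψ : G →* ℂˣ) (g : G) :
    (FDRep.of (twistRep V ψ)).character g = (ψ g : ℂ) * V.character g := by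
  change LinearMap.trace ℂ V ((ψ g : ℂ) • V.ρ g) = _
  rw [map_smul]
  rfl

open CategoryTheory in
theorem twist_simple {G : Type} [Group G] [Fintype G] (V : FDRep ℂ G) (hV : Simple V)
    (ψ : G →* ℂˣ) : Simple (FDRep.of (twistRep V ψ)) := by
  rw [FDRep.simple_iff_char_is_norm_one, ← (FDRep.simple_iff_char_is_norm_one V).1 hV]
  refine Finset.sum_congr rfl fun g _ => ?_
  rw [twist_char, twist_char, map_inv]
  have : (ψ g : ℂ) * ((ψ g)⁻¹ : ℂˣ) = 1 := by simp
  linear_combination (V.character g * V.character g⁻¹) * this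

/-- Restriction to a subgroup. -/
noncomputable def resRep {G : Type} [Group G] (V : FDRep ℂ G) (N : Subgroup G) : FDRep ℂ N :=
  FDRep.of (V := V) (V.ρ.comp N.subtype)

open CategoryTheory in
theorem res_simple {G : Type} [Group G] (N : Subgroup G) [Fintype N] (V : FDRep ℂ G)
    (T : FDRep ℂ N) (hT : Simple T) (h : (fun n : N => V.character n) = T.character) :
    Simple (resRep V N) := by
  rw [FDRep.simple_iff_char_is_norm_one]
  have : (resRep V N).character = T.character := h
  rw [this]
  exact (FDRep.simple_iff_char_is_norm_one T).1 hT

open CategoryTheory in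
theorem exists_twist {G : Type} [Group G] [Fintype G] (N : Subgroup G) [N.Normal]
    (V W : FDRep ℂ G) (hV : Simple (resRep V N)) (hW : Simple (resRep W N))
    (h : ∀ n : N, V.character n = W.character n) :
    ∃ χ : (G ⧸ N) →* ℂˣ, ∀ g : G, W.character g = (χ (g : G ⧸ N) : ℂ) * V.character g := by
  classical
  have : Fintype N := Fintype.ofFinite N
  obtain ⟨e, he⟩ := aux_iso (resRep V N) (resRep W N) hV hW (funext h)
  change V ≃ₗ[ℂ] W at e
  replace he : ∀ (n : N) (v : V), e (V.ρ n v) = W.ρ n (e v) := he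
  obtain ⟨v0, hv0⟩ : ∃ v : V, v ≠ 0 := aux_nontrivial (resRep V N) hV
  have mulV : ∀ (a b : G) (v : V), V.ρ (a * b) v = V.ρ a (V.ρ b v) := fun a b v => by
    rw [map_mul]; rfl
  have mulW : ∀ (a b : G) (v : W), W.ρ (a * b) v = W.ρ a (W.ρ b v) := fun a b v => by
    rw [map_mul]; rfl
  have oneV : ∀ v : V, V.ρ 1 v = v := fun v => by rw [map_one]; rfl
  have oneW : ∀ v : W, W.ρ 1 v = v := fun v => by rw [map_one]; rfl
  have key : ∀ g : G, ∃ c : ℂ, ∀ v : V, W.ρ g (e v) = c • e (V.ρ g v) := by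
    intro g
    let f : V →ₗ[ℂ] V := e.symm.toLinearMap ∘ₗ W.ρ g ∘ₗ e.toLinearMap ∘ₗ V.ρ g⁻¹
    have hf : ∀ v, f v = e.symm (W.ρ g (e (V.ρ g⁻¹ v))) := fun v => rfl
    obtain ⟨c, hc⟩ : ∃ c : ℂ, ∀ v : V, f v = c • v := by
      refine aux_schur (resRep V N) hV f ?_
      intro n (v : V)
      change f (V.ρ n v) = V.ρ n (f v)
      rw [hf, hf]
      apply e.injective
      rw [he, LinearEquiv.apply_symm_apply, LinearEquiv.apply_symm_apply, ← mulV]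
      have hn : g⁻¹ * (n : G) * g ∈ N := by
        simpa using (inferInstance : N.Normal).conj_mem n n.2 g⁻¹
      have h1 : g⁻¹ * (n : G) = ((⟨_, hn⟩ : N) : G) * g⁻¹ := by simp
      rw [h1, mulV, he, ← mulW, ← mulW]
      congr 2
      simp [mul_assoc]
    refine ⟨c, fun v => ?_⟩
    have := hc (V.ρ g v)
    rw [hf, ← mulV, inv_mul_cancel, oneV] at this
    rw [← map_smul, ← this, LinearEquiv.apply_symm_apply]
  choose c hc using key
  have inj : ∀ (a b : ℂ) (g : G), a • e (V.ρ g v0) = b • e (V.ρ g v0) → a = b := by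
    intro a b g hab
    refine smul_left_injective ℂ (M := W) ?_ hab
    intro h0
    have : V.ρ g v0 = 0 := e.injective (by rw [h0, map_zero])
    apply hv0
    have h2 := oneV v0
    rw [← inv_mul_cancel g, mulV, this, map_zero] at h2
    exact h2.symm
  have c_n : ∀ n : N, c n = 1 := fun n => inj _ _ n (by rw [← hc, he, one_smul])
  have c_mul : ∀ a b, c (a * b) = c a * c b := fun a b => inj _ _ (a * b) (by
    rw [← hc, mulW, hc b, map_smul, hc a, mulV, smul_smul, mul_comm])
  let C : G →* ℂ := ⟨⟨c, c_n 1⟩, c_mul⟩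
  let χ : (G ⧸ N) →* ℂˣ := QuotientGroup.lift N C.toHomUnits (fun n hn => by
    ext
    exact c_n ⟨n, hn⟩)
  refine ⟨χ, fun g => ?_⟩
  have hχ : (χ (g : G ⧸ N) : ℂ) = c g := rfl
  rw [hχ]
  have : W.ρ g = c g • e.conj (V.ρ g) := by
    ext w
    have := hc g (e.symm w)
    rw [LinearEquiv.apply_symm_apply] at this
    rw [this, LinearMap.smul_apply, LinearEquiv.conj_apply_apply]
  rw [FDRep.character, this, map_smul, LinearMap.trace_conj']
  rfl

open CategoryTheory in
theorem twist_inj {G : Type} [Group G] [Fintype G] (N : Subgroup G) [N.Normal]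
    (V : FDRep ℂ G) (hV : Simple V) (hVN : Simple (resRep V N)) (ψ : (G ⧸ N) →* ℂˣ)
    (h : ∀ g : G, (ψ (g : G ⧸ N) : ℂ) * V.character g = V.character g) : ψ = 1 := by
  classical
  have : Fintype N := Fintype.ofFinite N
  let p : G →* ℂˣ := ψ.comp (QuotientGroup.mk' N)
  obtain ⟨e, he⟩ := aux_iso V (FDRep.of (twistRep V p)) hV (twist_simple V hV p)
    (funext fun g => ((twist_char V p g).trans (h g)).symm)
  change V ≃ₗ[ℂ] V at e
  replace he : ∀ (g : G) (v : V), e (V.ρ g v) = (ψ (g : G ⧸ N) : ℂ) • V.ρ g (e v) := he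
  obtain ⟨c, hc⟩ : ∃ c : ℂ, ∀ v : V, e v = c • v := by
    refine aux_schur (resRep V N) hVN e.toLinearMap ?_
    intro n (v : V)
    change e (V.ρ n v) = V.ρ n (e v)
    rw [he, (QuotientGroup.eq_one_iff (n : G)).2 n.2]
    simp
  obtain ⟨v0, hv0⟩ := aux_nontrivial V hV
  refine MonoidHom.ext fun x => Units.ext ?_
  induction x using QuotientGroup.induction_on with
  | H g =>
    have h1 := he g (V.ρ g⁻¹ v0)
    have h2 : V.ρ g (V.ρ g⁻¹ v0) = v0 := by
      rw [← Module.End.mul_apply, ← map_mul, mul_inv_cancel, map_one, Module.End.one_apply]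
    rw [hc (V.ρ g⁻¹ v0), map_smul, h2, ← hc] at h1
    have h3 : (1 : ℂ) • e v0 = (ψ (g : G ⧸ N) : ℂ) • e v0 := by rw [one_smul, ← h1]
    have h4 : e v0 ≠ 0 := by simpa using hv0
    exact (smul_left_injective ℂ h4 h3).symm

/-- If `G ⧸ N` is cyclic and `ρ ∈ Irr G` restricts to `τ ∈ Irr N`, then
the irreducible characters of `G` restricting to `τ` are exactly the `Q̂`-orbit of `ρ`,
which has `(G:N)` elements. -/
theorem restrict_fiber_eq_orbit
    (G : Type) [Group G] [Fintype G] (N : Subgroup G) [N.Normal]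
    (hcyc : IsCyclic (G ⧸ N))
    (τ : ↥N → ℂ) (hτ : IsIrrChar ↥N τ)
    (ρ : G → ℂ) (hρ : IsIrrChar G ρ) (hres : (fun n : ↥N => ρ ↑n) = τ) :
    {ρ' : G → ℂ | IsIrrChar G ρ' ∧ (fun n : ↥N => ρ' ↑n) = τ} = qhatOrbit N ρ ∧
    (qhatOrbit N ρ).ncard = N.index := by
  classical
  have : Fintype N := Fintype.ofFinite N
  obtain ⟨T, hT, rfl⟩ := hτ
  obtain ⟨V, hV, rfl⟩ := hρ
  have hVN := res_simple N V T hT hres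
  constructor
  · ext ρ'
    constructor
    · rintro ⟨⟨W, hW, rfl⟩, hr⟩
      obtain ⟨χ, hχ⟩ := exists_twist N V W hVN (res_simple N W T hT hr)
        (fun n => congrFun (hres.trans hr.symm) n)
      exact ⟨χ, funext hχ⟩
    · rintro ⟨χ, rfl⟩
      refine ⟨⟨FDRep.of (twistRep V (χ.comp (QuotientGroup.mk' N))), twist_simple V hV _,
        funext fun g => (twist_char V (χ.comp (QuotientGroup.mk' N)) g).symm⟩, ?_⟩
      rw [← hres]
      funext n
      simp only [charMul]
      rw [(QuotientGroup.eq_one_iff (n : G)).2 n.2]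
      simp
  · have hinj : Function.Injective (fun χ : (G ⧸ N) →* ℂˣ => charMul N χ V.character) := by
      intro χ χ' hh
      have h1 : χ'⁻¹ * χ = 1 := by
        refine twist_inj N V hV hVN _ fun g => ?_
        have := congrFun hh g
        simp only [charMul] at this
        rw [MonoidHom.mul_apply, Units.val_mul, mul_assoc, this, ← mul_assoc,
          MonoidHom.inv_apply, Units.inv_mul, one_mul]
      exact (inv_mul_eq_one.1 h1).symm
    have hr : qhatOrbit N V.character =
        Set.range (fun χ : (G ⧸ N) →* ℂˣ => charMul N χ V.character) := by
      ext; simp [qhatOrbit, eq_comm]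
    rw [hr, ← Set.image_univ, Set.ncard_image_of_injective _ hinj, Set.ncard_univ]
    letI : CommGroup (G ⧸ N) := IsCyclic.commGroup
    exact CommGroup.card_monoidHom_of_hasEnoughRootsOfUnity (G ⧸ N) ℂ
end

section
/- Let G be a finite group, N a normal subgroup with Q = G/N cyclic, ρ an irreducible complex character of G, and m_ρ = ⟨Res_N ρ, Res_N ρ⟩ (an integer). Then for one-dimensional characters ψ, ψ' of G that are trivial on N, the characters ψ ⊗ ρ and ψ' ⊗ ρ are equal if and only if (ψ/ψ')^{m_ρ} is the trivial character. -/
open scoped BigOperators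

variable {G : Type} [Group G]

lemma aux_trace_conj {V : Type*} [AddCommGroup V] [Module ℂ V] [FiniteDimensional ℂ V]
    (f g : Module.End ℂ V) (n : ℕ) (hn : n ≠ 0) (hf : f ^ n = 1) (hgf : g * f = 1) :
    LinearMap.trace ℂ V g = (starRingEnd ℂ) (LinearMap.trace ℂ V f) := by
  classical
  have hss : f.IsSemisimple := by
    apply Module.End.isSemisimple_of_squarefree_aeval_eq_zero
      (p := (Polynomial.X ^ n - 1 : Polynomial ℂ))
    · exact (Polynomial.separable_X_pow_sub_C (1 : ℂ) (by exact_mod_cast hn)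
        one_ne_zero).squarefree
    · simp [hf]
  have htop := hss.iSup_eigenspace_eq_top
  have hds := DirectSum.isInternal_submodule_of_iSupIndep_of_iSup_eq_top
      f.eigenspaces_iSupIndep htop
  have hfin : {μ | f.eigenspace μ ≠ ⊥}.Finite :=
    WellFoundedGT.finite_ne_bot_of_iSupIndep f.eigenspaces_iSupIndep
  have hunit : ∀ μ : ℂ, f.eigenspace μ ≠ ⊥ → ‖μ‖ = 1 := by
    intro μ hμ
    obtain ⟨v, hv, hv0⟩ := (Submodule.ne_bot_iff _).mp hμ
    have hp : ∀ k : ℕ, (f ^ k) v = μ ^ k • v := by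
      intro k
      induction k with
      | zero => simp
      | succ k ih =>
        rw [pow_succ, Module.End.mul_apply, Module.End.mem_eigenspace_iff.mp hv, map_smul, ih,
          smul_smul, pow_succ, mul_comm]
    have h1 := hp n
    rw [hf] at h1
    have h2 : (μ ^ n - 1) • v = 0 := by rw [sub_smul, ← h1]; simp
    have h3 : μ ^ n = 1 := by
      rcases smul_eq_zero.mp h2 with h | h
      · exact sub_eq_zero.mp h
      · exact absurd h hv0
    exact Complex.norm_eq_one_of_pow_eq_one h3 hn
  have hgv : ∀ μ : ℂ, ∀ v ∈ f.eigenspace μ, g v = (starRingEnd ℂ μ) • v := by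
    intro μ v hv
    by_cases hv0 : v = 0
    · simp [hv0]
    have hμ : f.eigenspace μ ≠ ⊥ := (Submodule.ne_bot_iff _).mpr ⟨v, hv, hv0⟩
    have h1 := hunit μ hμ
    have h2 : g (f v) = v := by
      have := LinearMap.congr_fun hgf v
      simpa using this
    rw [Module.End.mem_eigenspace_iff.mp hv, map_smul] at h2
    have h3 : (starRingEnd ℂ μ) * μ = 1 := by
      rw [mul_comm, Complex.mul_conj, Complex.normSq_eq_norm_sq, h1]; simp
    conv_rhs => rw [← h2, smul_smul, h3, one_smul]
  have hfm : ∀ μ : ℂ, Set.MapsTo f (f.eigenspace μ) (f.eigenspace μ) := by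
    intro μ v hv
    have hv' : v ∈ f.eigenspace μ := hv
    change f v ∈ f.eigenspace μ
    rw [Module.End.mem_eigenspace_iff.mp hv']
    exact Submodule.smul_mem _ _ hv'
  have hgm : ∀ μ : ℂ, Set.MapsTo g (f.eigenspace μ) (f.eigenspace μ) := by
    intro μ v hv
    have hv' : v ∈ f.eigenspace μ := hv
    change g v ∈ f.eigenspace μ
    rw [hgv μ v hv']
    exact Submodule.smul_mem _ _ hv'
  rw [LinearMap.trace_eq_sum_trace_restrict' hds hfin hfm,
    LinearMap.trace_eq_sum_trace_restrict' hds hfin hgm, map_sum]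
  refine Finset.sum_congr rfl fun μ _ => ?_
  have e1 : f.restrict (hfm μ) = μ • (1 : Module.End ℂ (f.eigenspace μ)) := by
    ext v
    exact Module.End.mem_eigenspace_iff.mp v.2
  have e2 : g.restrict (hgm μ) = (starRingEnd ℂ μ) • (1 : Module.End ℂ (f.eigenspace μ)) := by
    ext v
    exact hgv μ v v.2
  rw [e1, e2]
  simp

lemma aux_char_inv {G : Type} [Group G] [Fintype G] (V : FDRep ℂ G) (g : G) :
    V.character g⁻¹ = (starRingEnd ℂ) (V.character g) := by
  refine aux_trace_conj (V.ρ g) (V.ρ g⁻¹) (Fintype.card G) Fintype.card_ne_zero ?_ ?_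
  · rw [← map_pow, pow_card_eq_one, map_one]
  · rw [← map_mul, inv_mul_cancel, map_one]

/-- twist of a representation by a one-dimensional character -/
noncomputable def auxTwist {G : Type} [Group G] {V : Type*} [AddCommGroup V] [Module ℂ V]
    (ψ : G →* ℂˣ) (r : Representation ℂ G V) : Representation ℂ G V where
  toFun g := (ψ g : ℂ) • r g
  map_one' := by simp
  map_mul' a b := by
    rw [map_mul, map_mul, Units.val_mul, smul_mul_smul_comm]

lemma aux_nat {G : Type} [Group G] [Fintype G] (V : FDRep ℂ G) (ψ : G →* ℂˣ) :
    ∃ d : ℕ, (Nat.card G : ℂ)⁻¹ * ∑ g : G, (ψ g : ℂ) * (V.character g *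
      (starRingEnd ℂ) (V.character g)) = d := by
  have : Invertible (Nat.card G : ℂ) :=
    invertibleOfNonzero (Nat.cast_ne_zero.mpr Nat.card_pos.ne')
  refine ⟨_, Eq.trans ?_
    (Representation.card_inv_mul_sum_char_mul_char_eq_finrank V.ρ (auxTwist ψ V.ρ))⟩
  congr 1
  refine Finset.sum_congr rfl fun g _ => ?_
  rw [← aux_char_inv, ← mul_assoc]
  congr 1
  simp [Representation.character, auxTwist, FDRep.character]

lemma aux_norm {G : Type} [Group G] [Fintype G] (V : FDRep ℂ G) [CategoryTheory.Simple V] :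
    ∑ g : G, ‖V.character g‖ ^ 2 = Nat.card G := by
  have h := (FDRep.simple_iff_char_is_norm_one V).mp inferInstance
  simp_rw [aux_char_inv, Complex.mul_conj, Complex.normSq_eq_norm_sq] at h
  exact_mod_cast h

open Classical in
lemma aux_ip {G : Type} [Group G] [Fintype G] (V : FDRep ℂ G) [CategoryTheory.Simple V]
    (ψ : G →* ℂˣ) :
    (Nat.card G : ℂ)⁻¹ * ∑ g : G, (ψ g : ℂ) * (V.character g *
      (starRingEnd ℂ) (V.character g)) =
      if (∀ g, (ψ g : ℂ) * V.character g = V.character g) then 1 else 0 := by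
  have hn := aux_norm V
  have hc : (Nat.card G : ℂ) ≠ 0 := Nat.cast_ne_zero.mpr Nat.card_pos.ne'
  have hcR : (0 : ℝ) < (Nat.card G : ℝ) := Nat.cast_pos.mpr Nat.card_pos
  have hψ : ∀ g, ‖(ψ g : ℂ)‖ = 1 := fun g => by
    refine Complex.norm_eq_one_of_pow_eq_one (n := Fintype.card G) ?_ Fintype.card_ne_zero
    rw [← Units.val_pow_eq_pow_val, ← map_pow, pow_card_eq_one]; simp
  split_ifs with h
  · simp_rw [← mul_assoc, h, Complex.mul_conj, Complex.normSq_eq_norm_sq]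
    rw [← Complex.ofReal_sum, hn]
    simp
  · obtain ⟨d, hd⟩ := aux_nat V ψ
    rw [hd]
    rw [inv_mul_eq_iff_eq_mul₀ hc] at hd
    simp_rw [Complex.mul_conj, Complex.normSq_eq_norm_sq] at hd
    have hre := congrArg Complex.re hd
    simp only [Complex.re_sum, Complex.re_mul_ofReal] at hre
    have hr2 : ((Nat.card G : ℂ) * (d : ℂ)).re = (Nat.card G : ℝ) * d := by
      rw [← Complex.ofReal_natCast, ← Complex.ofReal_natCast, ← Complex.ofReal_mul,
        Complex.ofReal_re]
    rw [hr2] at hre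
    have hle : ∀ g, (ψ g : ℂ).re ≤ 1 := fun g => (Complex.re_le_norm _).trans (hψ g).le
    push Not at h
    obtain ⟨g₀, hg₀⟩ := h
    have hlt : ∑ g : G, (ψ g : ℂ).re * ‖V.character g‖ ^ 2 < ∑ g : G, ‖V.character g‖ ^ 2 := by
      refine Finset.sum_lt_sum (fun g _ => ?_) ⟨g₀, Finset.mem_univ _, ?_⟩
      · nlinarith [hle g, sq_nonneg ‖V.character g‖]
      · have h0 : V.character g₀ ≠ 0 := fun h => hg₀ (by simp [h])
        have h1 : (ψ g₀ : ℂ) ≠ 1 := fun h => hg₀ (by simp [h])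
        have h2 : (ψ g₀ : ℂ).re < 1 := by
          refine lt_of_le_of_ne (hle g₀) fun h => h1 ?_
          have h3 := hψ g₀
          have h4 := Complex.normSq_eq_norm_sq (ψ g₀ : ℂ)
          rw [h3, Complex.normSq_apply, h] at h4
          have h5 : (ψ g₀ : ℂ).im = 0 := by nlinarith
          exact Complex.ext (by simpa using h) (by simpa using h5)
        have : 0 < ‖V.character g₀‖ ^ 2 := by positivity
        nlinarith
    rw [hre, hn] at hlt
    have h6 : (d : ℝ) < 1 := by nlinarith
    have h7 : d < 1 := by exact_mod_cast h6
    have : d = 0 := by omega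
    simp [this]

lemma aux_orth {Q : Type*} [CommGroup Q] [Finite Q] [Fintype (Q →* ℂˣ)] {x : Q} (hx : x ≠ 1) :
    ∑ χ : Q →* ℂˣ, (χ x : ℂ) = 0 := by
  have : NeZero (Monoid.exponent Q) := ⟨Monoid.exponent_ne_zero_of_finite⟩
  obtain ⟨φ, hφ⟩ := CommGroup.exists_apply_ne_one_of_hasEnoughRootsOfUnity Q ℂ hx
  have h1 : ∑ χ : Q →* ℂˣ, (χ x : ℂ) = (φ x : ℂ) * ∑ χ : Q →* ℂˣ, (χ x : ℂ) := by
    rw [Finset.mul_sum, ← Equiv.sum_comp (Equiv.mulLeft φ)]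
    simp
  have h2 : (φ x : ℂ) ≠ 1 := fun h => hφ (Units.ext h)
  have h3 : ((φ x : ℂ) - 1) * ∑ χ : Q →* ℂˣ, (χ x : ℂ) = 0 := by
    rw [sub_mul, ← h1]; ring
  exact (mul_eq_zero.mp h3).resolve_left (sub_ne_zero.mpr h2)

lemma aux_cyc {A : Type*} [CommGroup A] [IsCyclic A] [Finite A] (S : Subgroup A) (ψ : A) :
    ψ ∈ S ↔ ψ ^ Nat.card S = 1 := by
  classical
  have := Fintype.ofFinite A
  constructor
  · intro h
    exact congrArg Subtype.val (pow_card_eq_one' (x := (⟨ψ, h⟩ : S)))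
  · intro h
    have hle := IsCyclic.card_pow_eq_one_le (α := A) (n := Nat.card S) Nat.card_pos
    have hsub : (S : Set A).toFinset ⊆ Finset.univ.filter fun a : A => a ^ Nat.card S = 1 := by
      intro a ha
      have ha' : a ∈ S := by simpa using ha
      exact Finset.mem_filter.mpr ⟨Finset.mem_univ _,
        congrArg Subtype.val (pow_card_eq_one' (x := (⟨a, ha'⟩ : S)))⟩
    have heq := Finset.eq_of_subset_of_card_le hsub (by
      refine hle.trans ?_
      rw [Set.toFinset_card, ← Nat.card_eq_fintype_card]
      exact le_rfl)
    have : ψ ∈ (S : Set A).toFinset := by rw [heq]; simpa using h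
    simpa using this

/-- For `G ⧸ N` cyclic, `ρ ∈ Irr G` and `m_ρ = ⟨Res_N ρ, Res_N ρ⟩`, two
characters `χ, χ' ∈ Q̂` satisfy `χ ⊗ ρ = χ' ⊗ ρ` iff `(χ/χ')^{m_ρ} = 1`. -/
theorem tensor_eq_iff_ratio_pow_trivial
    (G : Type) [Group G] [Fintype G] (N : Subgroup G) [N.Normal]
    (hcyc : IsCyclic (G ⧸ N))
    (ρ : G → ℂ) (hρ : IsIrrChar G ρ) (m : ℕ)
    (hm : (m : ℂ) = (Nat.card ↥N : ℂ)⁻¹ * ∑ᶠ n ∈ (N : Set G), ρ n * (starRingEnd ℂ) (ρ n))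
    (χ χ' : (G ⧸ N) →* ℂˣ) :
    charMul N χ ρ = charMul N χ' ρ ↔ (χ / χ') ^ m = 1 := by
  classical
  obtain ⟨V, hV, rfl⟩ := hρ
  let _ : CommGroup (G ⧸ N) := IsCyclic.commGroup
  have hexp : NeZero (Monoid.exponent (G ⧸ N)) := ⟨Monoid.exponent_ne_zero_of_finite⟩
  obtain ⟨e⟩ := CommGroup.monoidHom_mulEquiv_of_hasEnoughRootsOfUnity (G ⧸ N) ℂ
  have hfin : Finite ((G ⧸ N) →* ℂˣ) := Finite.of_equiv _ e.symm.toEquiv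
  have hcyc' : IsCyclic ((G ⧸ N) →* ℂˣ) := isCyclic_of_surjective e.symm e.symm.surjective
  have := Fintype.ofFinite ((G ⧸ N) →* ℂˣ)
  let S : Subgroup ((G ⧸ N) →* ℂˣ) :=
    { carrier := {ψ | ∀ g : G, (ψ (g : G ⧸ N) : ℂ) * V.character g = V.character g}
      one_mem' := by intro g; simp
      mul_mem' := by
        intro a b ha hb g
        rw [MonoidHom.mul_apply, Units.val_mul, mul_assoc, hb g, ha g]
      inv_mem' := by
        intro a ha g
        conv_lhs => rw [← ha g]
        rw [← mul_assoc, ← Units.val_mul]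
        simp }
  have hS : ∀ ψ, ψ ∈ S ↔ ∀ g : G, (ψ (g : G ⧸ N) : ℂ) * V.character g = V.character g :=
    fun ψ => Iff.rfl
  have hcardQ : Fintype.card ((G ⧸ N) →* ℂˣ) = Nat.card (G ⧸ N) := by
    rw [← Nat.card_eq_fintype_card]; exact Nat.card_congr e.toEquiv
  have hcardG : Nat.card G = Nat.card (G ⧸ N) * Nat.card N :=
    Subgroup.card_eq_card_quotient_mul_card_subgroup N
  have hQ0 : (Nat.card (G ⧸ N) : ℂ) ≠ 0 := Nat.cast_ne_zero.mpr Nat.card_pos.ne'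
  have hN0 : (Nat.card N : ℂ) ≠ 0 := Nat.cast_ne_zero.mpr Nat.card_pos.ne'
  have hmS : m = Nat.card S := by
    have h1 : ∑ ψ : (G ⧸ N) →* ℂˣ, ((Nat.card G : ℂ)⁻¹ * ∑ g : G, (ψ (g : G ⧸ N) : ℂ) *
        (V.character g * (starRingEnd ℂ) (V.character g))) = Nat.card S := by
      have h2 : ∀ ψ : (G ⧸ N) →* ℂˣ, ((Nat.card G : ℂ)⁻¹ * ∑ g : G, (ψ (g : G ⧸ N) : ℂ) *
          (V.character g * (starRingEnd ℂ) (V.character g))) = if ψ ∈ S then 1 else 0 :=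
        fun ψ => (aux_ip V (ψ.comp (QuotientGroup.mk' N))).trans (if_congr Iff.rfl rfl rfl)
      rw [Finset.sum_congr rfl fun ψ _ => h2 ψ, Finset.sum_boole, Nat.card_eq_fintype_card,
        Fintype.card_subtype]
    have h3 : (m : ℂ) = Nat.card S := by
      rw [← h1, hm, ← Finset.mul_sum, Finset.sum_comm, hcardG]
      have h4 : ∀ g : G, ∑ ψ : (G ⧸ N) →* ℂˣ, (ψ (g : G ⧸ N) : ℂ) *
          (V.character g * (starRingEnd ℂ) (V.character g)) =
          if g ∈ N then (Nat.card (G ⧸ N) : ℂ) *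
            (V.character g * (starRingEnd ℂ) (V.character g)) else 0 := by
        intro g
        rw [← Finset.sum_mul]
        split_ifs with hg
        · rw [(QuotientGroup.eq_one_iff g).mpr hg]
          simp [hcardQ]
        · rw [aux_orth (fun h => hg ((QuotientGroup.eq_one_iff g).mp h)), zero_mul]
      have hfs : ∑ᶠ n ∈ (N : Set G), V.character n * (starRingEnd ℂ) (V.character n) =
          ∑ g : G with g ∈ N, V.character g * (starRingEnd ℂ) (V.character g) := by
        rw [← finsum_mem_coe_finset]
        simp
      simp_rw [h4]
      rw [← Finset.sum_filter, ← Finset.mul_sum, hfs]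
      push_cast
      field_simp
    exact_mod_cast h3
  rw [hmS, ← aux_cyc, hS, funext_iff]
  refine forall_congr' fun g => ?_
  simp only [charMul, MonoidHom.div_apply, Units.val_div_eq_div_val]
  rw [div_mul_eq_mul_div, div_eq_iff (Units.ne_zero _), mul_comm (V.character g)]
end
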